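/- Let L be a simple graded ℤ-graded Lie conformal algebra as in the structure context (every nonzero component free of rank one over ℂ[∂], 0 ∈ Supp(L), L₀ abelian), and suppose k ∈ Supp₁(L). Then for every j ∈ Supp(L) there exists c_j ∈ ℂ such that p_{0,j}(λ) = c_j · p_{0,k}(λ). -/

import Mathlib

open scoped BigOperators Classical ENNReal
open Polynomial

noncomputable section

/-- A Lie conformal algebra over `ℂ`, encoded via its `n`-th products
`a_(n) b` and the operator `∂ = D`.  The `λ`-bracket is
`[a_λ b] = ∑ₙ (λⁿ/n!) • (a_(n) b)`. -/
structure LieConformalAlgebra (L : Type) [AddCommGroup L] [Module ℂ L] : Type where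
  D : L →ₗ[ℂ] L
  prd : ℕ → L →ₗ[ℂ] L →ₗ[ℂ] L
  bound : ∀ a b : L, ∃ N : ℕ, ∀ n : ℕ, N ≤ n → prd n a b = 0
  sesq : ∀ (n : ℕ) (a b : L), prd n (D a) b = (-(n : ℂ)) • prd (n - 1) a b
  sesq' : ∀ (n : ℕ) (a b : L),
    prd n a (D b) = D (prd n a b) + (n : ℂ) • prd (n - 1) a b
  skew : ∀ (n : ℕ) (a b : L),
    prd n a b
      = - ∑ᶠ j : ℕ, ((-1 : ℂ) ^ (n + j) * ((Nat.factorial j : ℂ))⁻¹) • (⇑D)^[j] (prd (n + j) b a)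
  jacobi : ∀ (m n : ℕ) (a b c : L),
    prd m a (prd n b c) - prd n b (prd m a c)
      = ∑ j ∈ Finset.range (m + 1), (Nat.choose m j : ℂ) • prd (m + n - j) (prd j a b) c

namespace LieConformalAlgebra

variable {L : Type} [AddCommGroup L] [Module ℂ L]

/-- The action of a polynomial `q(∂) ∈ ℂ[∂]` on an element. -/
def applyP (C : LieConformalAlgebra L) (q : Polynomial ℂ) (x : L) : L :=
  q.sum fun k c => c • (⇑C.D)^[k] x

/-- `[a_λ b] = p(∂, λ) • t`, where `p ∈ ℂ[∂][λ]` is a two-variable polynomial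
(outer variable `λ`, inner variable `∂`). -/
def BracketEq (C : LieConformalAlgebra L) (a b t : L) (p : Polynomial (Polynomial ℂ)) : Prop :=
  ∀ n : ℕ, C.prd n a b = (Nat.factorial n : ℂ) • C.applyP (p.coeff n) t

def IsSubalgebra (C : LieConformalAlgebra L) (N : Submodule ℂ L) : Prop :=
  (∀ x ∈ N, C.D x ∈ N) ∧ ∀ n : ℕ, ∀ a ∈ N, ∀ b ∈ N, C.prd n a b ∈ N

def IsIdeal (C : LieConformalAlgebra L) (N : Submodule ℂ L) : Prop :=
  (∀ x ∈ N, C.D x ∈ N) ∧ ∀ (n : ℕ) (a : L), ∀ b ∈ N, C.prd n a b ∈ N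

/-- `L` is finitely generated as a Lie conformal algebra (finite type). -/
def FiniteType (C : LieConformalAlgebra L) : Prop :=
  ∃ s : Finset L, ∀ N : Submodule ℂ L, C.IsSubalgebra N → (s : Set L) ⊆ (N : Set L) → N = ⊤

/-- `L` is finitely generated as a `ℂ[∂]`-module. -/
def FGPolyModule (C : LieConformalAlgebra L) : Prop :=
  ∃ s : Finset L, ∀ N : Submodule ℂ L, (∀ x ∈ N, C.D x ∈ N) → (s : Set L) ⊆ (N : Set L) → N = ⊤

/-- Iterated adjoint action `a₁_(k₁)(a₂_(k₂)(⋯ x))`. -/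
def iterPrd (C : LieConformalAlgebra L) : List (L × ℕ) → L → L
  | [], x => x
  | (a, k) :: t, x => C.prd k a (iterPrd C t x)

/-- The `ℂ[∂]`-rank of the submodule `N` is at most `r`:
any `r+1` elements of `N` are `ℂ[∂]`-linearly dependent. -/
def polyRankLE (C : LieConformalAlgebra L) (N : Submodule ℂ L) (r : ℕ) : Prop :=
  ∀ v : Fin (r + 1) → L, (∀ k, v k ∈ N) →
    ∃ q : Fin (r + 1) → Polynomial ℂ, (∃ k, q k ≠ 0) ∧ ∑ k, C.applyP (q k) (v k) = 0

/-- The family `v` is a free `ℂ[∂]`-basis of `L`. -/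
def IsFreePolyBasis (C : LieConformalAlgebra L) {ι : Type} (v : ι → L) : Prop :=
  LinearIndependent ℂ (fun q : ι × ℕ => (⇑C.D)^[q.2] (v q.1)) ∧
  Submodule.span ℂ (Set.range fun q : ι × ℕ => (⇑C.D)^[q.2] (v q.1)) = ⊤

/-- `[U_λ V]`: the `ℂ`-span of all `u_(n) v`. -/
def bspan (C : LieConformalAlgebra L) (U V : Set L) : Submodule ℂ L :=
  Submodule.span ℂ {x : L | ∃ (n : ℕ) (u : L) (w : L), u ∈ U ∧ w ∈ V ∧ x = C.prd n u w}

end LieConformalAlgebra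

/-- `∂` as an element of `ℂ[∂][λ]`. -/
def Pd : Polynomial (Polynomial ℂ) := Polynomial.C Polynomial.X
/-- `λ` as an element of `ℂ[∂][λ]`. -/
def Pl : Polynomial (Polynomial ℂ) := Polynomial.X
/-- a constant in `ℂ[∂][λ]`. -/
def Pc (a : ℂ) : Polynomial (Polynomial ℂ) := Polynomial.C (Polynomial.C a)

/-- Total degree of a two-variable polynomial in `ℂ[∂][λ]`. -/
def tdeg (p : Polynomial (Polynomial ℂ)) : ℕ :=
  p.support.sup fun n => n + (p.coeff n).natDegree

section ModelPolynomials

/-- structure polynomials of `𝒱(s)` -/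
def pV (s : ℂ) (i j : ℤ) : Polynomial (Polynomial ℂ) :=
  Pd + Pc 2 * Pl + Pc (s * ((i : ℂ) - (j : ℂ)))

/-- structure polynomials of `CL₁(s)` -/
def pCL1 (s : ℂ) (i j : ℤ) : Polynomial (Polynomial ℂ) :=
  Pc ((i : ℂ) + 1) * Pd + Pc ((i : ℂ) + (j : ℂ) + 2) * Pl + Pc (s * ((i : ℂ) - (j : ℂ)))

/-- structure polynomials of `CL₂(b,s)` -/
def pCL2 (b s : ℂ) (i j : ℤ) : Polynomial (Polynomial ℂ) :=
  Pc ((i : ℂ) + b) * Pd + Pc ((i : ℂ) + (j : ℂ) + 2 * b) * Pl + Pc (s * ((i : ℂ) - (j : ℂ)))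

/-- structure polynomials of `SCL₂(b,s)` (for `2b ∈ ℤ`), w.r.t. the basis
`L'ᵢ = Lᵢ (i ≠ -2b)`, `L'_{-2b} = (∂+2s)L_{-2b}` of the corresponding graded
subalgebra of `CL₂(b,s)`. -/
def pSCL2 (b s : ℂ) (i j : ℤ) : Polynomial (Polynomial ℂ) :=
  (if (i : ℂ) = -(2 * b) then Pc (2 * s) - Pl else 1) *
  (if (j : ℂ) = -(2 * b) then Pd + Pl + Pc (2 * s) else 1) *
  (if (i : ℂ) + (j : ℂ) = -(2 * b) then Pc ((i : ℂ) + b) else pCL2 b s i j)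

/-- structure polynomials of `CL₃(s)` -/
def pCL3 (s : ℂ) (i j : ℤ) : Polynomial (Polynomial ℂ) :=
  if i + j = 0 then Pc (i : ℂ) * (Pd + Pc s)
  else if i = 0 then Pc (-(j : ℂ)) * (Pc (2 * s) - Pl)
  else if j = 0 then Pc (i : ℂ) * (Pd + Pl + Pc (2 * s))
  else Pc (i : ℂ) * Pd + Pc ((i : ℂ) + (j : ℂ)) * Pl + Pc (s * ((i : ℂ) - (j : ℂ)))

/-- structure polynomials of `ECL(s)` -/
def pECL (s : ℂ) (i j : ℤ) : Polynomial (Polynomial ℂ) :=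
  if i + j = 0 then Pc (i : ℂ) * (Pd + Pc s) * (Pd + Pc (2 * s))
  else if i = 0 then Pc (-(j : ℂ))
  else if j = 0 then Pc (i : ℂ)
  else Pc (i : ℂ) * Pd + Pc ((i : ℂ) + (j : ℂ)) * Pl + Pc (s * ((i : ℂ) - (j : ℂ)))

/-- structure polynomials of `M(1)` (indices `≥ -1`, completed by skew-symmetry) -/
def pM1 (i j : ℤ) : Polynomial (Polynomial ℂ) :=
  if i = 1 ∧ j = 1 then Pd + Pc 2 * Pl
  else if i = -1 ∧ 1 ≤ j then Pc (((j : ℂ) + 1) * ((j : ℂ) - 2) / 2)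
  else if j = -1 ∧ 1 ≤ i then Pc (-(((i : ℂ) + 1) * ((i : ℂ) - 2) / 2))
  else if i = 0 then Pc (-(j : ℂ))
  else if j = 0 then Pc (i : ℂ)
  else if i = 1 ∧ 2 ≤ j then 1
  else if j = 1 ∧ 2 ≤ i then -1
  else 0

/-- structure polynomials of `M(2)` (completed by skew-symmetry) -/
def pM2 (i j : ℤ) : Polynomial (Polynomial ℂ) :=
  if i = 1 ∧ j = 1 then Pd + Pc 2 * Pl
  else if i = -1 ∧ j = -1 then Pd + Pc 2 * Pl
  else if i = 0 then Pc (-(j : ℂ))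
  else if j = 0 then Pc (i : ℂ)
  else if i = -1 ∧ 1 ≤ j then Pc (((j : ℂ) + 1) * ((j : ℂ) - 2) / 2)
  else if j = -1 ∧ 1 ≤ i then Pc (-(((i : ℂ) + 1) * ((i : ℂ) - 2) / 2))
  else if i = 1 ∧ j ≤ -2 then Pc (((j : ℂ) - 1) * ((j : ℂ) + 2) / 2)
  else if j = 1 ∧ i ≤ -2 then Pc (-(((i : ℂ) - 1) * ((i : ℂ) + 2) / 2))
  else if i = -1 ∧ j ≤ -2 then 1
  else if j = -1 ∧ i ≤ -2 then -1
  else if i = 1 ∧ 2 ≤ j then 1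
  else if j = 1 ∧ 2 ≤ i then -1
  else 0

end ModelPolynomials

namespace LieConformalAlgebra

variable {L : Type} [AddCommGroup L] [Module ℂ L]

/-- `C` is isomorphic to the Virasoro Lie conformal algebra. -/
def IsVir (C : LieConformalAlgebra L) : Prop :=
  ∃ e : L, C.IsFreePolyBasis (fun _ : Unit => e) ∧ C.BracketEq e e e (Pd + Pc 2 * Pl)

/-- `C` is isomorphic to the loop Virasoro Lie conformal algebra `𝒱(s)`. -/
def IsV (C : LieConformalAlgebra L) (s : ℂ) : Prop :=
  ∃ v : ℤ → L, C.IsFreePolyBasis v ∧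
    ∀ i j : ℤ, C.BracketEq (v i) (v j) (v (i + j)) (pV s i j)

/-- `C` is isomorphic to `CL₁(s)`. -/
def IsCL1 (C : LieConformalAlgebra L) (s : ℂ) : Prop :=
  ∃ v : ℤ → L, C.IsFreePolyBasis (fun q : {i : ℤ // -1 ≤ i} => v q.1) ∧
    ∀ i j : ℤ, -1 ≤ i → -1 ≤ j →
      C.BracketEq (v i) (v j) (if -1 ≤ i + j then v (i + j) else 0) (pCL1 s i j)

/-- `C` is isomorphic to `CL₂(b,s)`. -/
def IsCL2 (C : LieConformalAlgebra L) (b s : ℂ) : Prop :=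
  ∃ v : ℤ → L, C.IsFreePolyBasis v ∧
    ∀ i j : ℤ, C.BracketEq (v i) (v j) (v (i + j)) (pCL2 b s i j)

/-- `C` is isomorphic to `SCL₂(b,s)`. -/
def IsSCL2 (C : LieConformalAlgebra L) (b s : ℂ) : Prop :=
  ∃ v : ℤ → L, C.IsFreePolyBasis v ∧
    ∀ i j : ℤ, C.BracketEq (v i) (v j) (v (i + j)) (pSCL2 b s i j)

/-- `C` is isomorphic to `CL₃(s)`. -/
def IsCL3 (C : LieConformalAlgebra L) (s : ℂ) : Prop :=
  ∃ v : ℤ → L, C.IsFreePolyBasis v ∧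
    ∀ i j : ℤ, C.BracketEq (v i) (v j) (v (i + j)) (pCL3 s i j)

/-- `C` is isomorphic to `ECL(s)`. -/
def IsECL (C : LieConformalAlgebra L) (s : ℂ) : Prop :=
  ∃ v : ℤ → L, C.IsFreePolyBasis v ∧
    ∀ i j : ℤ, C.BracketEq (v i) (v j) (v (i + j)) (pECL s i j)

/-- `C` is isomorphic to `M(1)`. -/
def IsM1 (C : LieConformalAlgebra L) : Prop :=
  ∃ v : ℤ → L, C.IsFreePolyBasis (fun q : {i : ℤ // -1 ≤ i} => v q.1) ∧
    ∀ i j : ℤ, -1 ≤ i → -1 ≤ j →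
      C.BracketEq (v i) (v j) (if -1 ≤ i + j then v (i + j) else 0) (pM1 i j)

/-- `C` is isomorphic to `M(2)`. -/
def IsM2 (C : LieConformalAlgebra L) : Prop :=
  ∃ v : ℤ → L, C.IsFreePolyBasis v ∧
    ∀ i j : ℤ, C.BracketEq (v i) (v j) (v (i + j)) (pM2 i j)

/-- `C` is isomorphic to the current Lie conformal algebra `Cur 𝔤`. -/
def IsCur (C : LieConformalAlgebra L) (g : Type) [LieRing g] [LieAlgebra ℂ g] : Prop :=
  ∃ φ : g →ₗ[ℂ] L,
    Function.Bijective (fun f : ℕ →₀ g => f.sum fun k x => (⇑C.D)^[k] (φ x)) ∧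
    (∀ x y : g, C.prd 0 (φ x) (φ y) = φ ⁅x, y⁆) ∧
    ∀ n : ℕ, 1 ≤ n → ∀ x y : g, C.prd n (φ x) (φ y) = 0

/-- `C ≅ Cur sl(2,ℂ)`. -/
def IsCurSl2 (C : LieConformalAlgebra L) : Prop :=
  C.IsCur ↥(LieAlgebra.SpecialLinear.sl (Fin 2) ℂ)

/-- `C ≅ Cur 𝒲`, `𝒲` the Witt algebra (basis `wᵢ`, `[wᵢ,wⱼ] = (j-i)w_{i+j}`). -/
def IsCurWitt (C : LieConformalAlgebra L) : Prop :=
  ∃ v : ℤ → L, C.IsFreePolyBasis v ∧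
    (∀ i j : ℤ, C.prd 0 (v i) (v j) = (((j : ℂ) - (i : ℂ))) • v (i + j)) ∧
    ∀ n : ℕ, 1 ≤ n → ∀ i j : ℤ, C.prd n (v i) (v j) = 0

/-- `C ≅ Cur 𝒲₁`, `𝒲₁` spanned by the `wᵢ`, `i ≥ -1`. -/
def IsCurWitt1 (C : LieConformalAlgebra L) : Prop :=
  ∃ v : ℤ → L, C.IsFreePolyBasis (fun q : {i : ℤ // -1 ≤ i} => v q.1) ∧
    (∀ i j : ℤ, -1 ≤ i → -1 ≤ j →
      C.prd 0 (v i) (v j) = (((j : ℂ) - (i : ℂ))) • (if -1 ≤ i + j then v (i + j) else 0)) ∧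
    ∀ n : ℕ, 1 ≤ n → ∀ i j : ℤ, -1 ≤ i → -1 ≤ j → C.prd n (v i) (v j) = 0

end LieConformalAlgebra

/-- A `ℤ`-graded Lie conformal algebra. -/
structure GradedLCA (L : Type) [AddCommGroup L] [Module ℂ L]
    extends LieConformalAlgebra L where
  G : ℤ → Submodule ℂ L
  internal : DirectSum.IsInternal G
  dGrade : ∀ i : ℤ, ∀ x ∈ G i, D x ∈ G i
  prdGrade : ∀ (i j : ℤ) (n : ℕ), ∀ a ∈ G i, ∀ b ∈ G j, prd n a b ∈ G (i + j)

namespace GradedLCA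

variable {L : Type} [AddCommGroup L] [Module ℂ L]

/-- A graded ideal: an ideal generated by homogeneous elements. -/
def IsGradedIdeal (C : GradedLCA L) (N : Submodule ℂ L) : Prop :=
  C.toLieConformalAlgebra.IsIdeal N ∧ (⨆ i : ℤ, N ⊓ C.G i) = N

/-- `L` is simple graded: nonzero bracket, and the only graded ideals are `⊥` and `⊤`. -/
def IsSimpleGraded (C : GradedLCA L) : Prop :=
  (∃ (n : ℕ) (a b : L), C.prd n a b ≠ 0) ∧
  ∀ N : Submodule ℂ L, C.IsGradedIdeal N → N = ⊥ ∨ N = ⊤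

/-- `[L_λ L] = L`. -/
def Perfect (C : GradedLCA L) : Prop :=
  Submodule.span ℂ {x : L | ∃ (n : ℕ) (a b : L), x = C.prd n a b} = ⊤

/-- Each component `L_i` is a nilpotent `L₀`-module under the adjoint action. -/
def Rootless (C : GradedLCA L) : Prop :=
  ∀ i : ℤ, ∃ n : ℕ, 1 ≤ n ∧ ∀ l : List (L × ℕ), l.length = n →
    (∀ q ∈ l, q.1 ∈ C.G 0) → ∀ x ∈ C.G i, C.toLieConformalAlgebra.iterPrd l x = 0

/-- The ranks of the components are uniformly bounded. -/
def UniformlyBounded (C : GradedLCA L) : Prop :=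
  ∃ N : ℕ, 1 ≤ N ∧ ∀ i : ℤ, C.toLieConformalAlgebra.polyRankLE (C.G i) N

end GradedLCA

/-- A module over a Lie conformal algebra, encoded via the `n`-th actions. -/
structure LCAModule {L : Type} [AddCommGroup L] [Module ℂ L] (C : LieConformalAlgebra L)
    (M : Type) [AddCommGroup M] [Module ℂ M] : Type where
  DM : M →ₗ[ℂ] M
  act : ℕ → L →ₗ[ℂ] M →ₗ[ℂ] M
  bound : ∀ (a : L) (m : M), ∃ N : ℕ, ∀ n : ℕ, N ≤ n → act n a m = 0
  sesq : ∀ (n : ℕ) (a : L) (m : M), act n (C.D a) m = (-(n : ℂ)) • act (n - 1) a m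
  sesq' : ∀ (n : ℕ) (a : L) (m : M),
    act n a (DM m) = DM (act n a m) + (n : ℂ) • act (n - 1) a m
  comm : ∀ (p q : ℕ) (a b : L) (m : M),
    act p a (act q b m) - act q b (act p a m)
      = ∑ j ∈ Finset.range (p + 1), (Nat.choose p j : ℂ) • act (p + q - j) (C.prd j a b) m

namespace LCAModule

variable {L : Type} [AddCommGroup L] [Module ℂ L] {C : LieConformalAlgebra L}
variable {M : Type} [AddCommGroup M] [Module ℂ M]

/-- Iterated action `a₁_(k₁)(a₂_(k₂)(⋯ m))`. -/
def iterAct (ρ : LCAModule C M) : List (L × ℕ) → M → M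
  | [], m => m
  | (a, k) :: t, m => ρ.act k a (iterAct ρ t m)

/-- `N` is an `L`-submodule of `M`. -/
def IsSub (ρ : LCAModule C M) (N : Submodule ℂ M) : Prop :=
  (∀ m ∈ N, ρ.DM m ∈ N) ∧ ∀ (n : ℕ) (a : L), ∀ m ∈ N, ρ.act n a m ∈ N

/-- `M` is a nilpotent module. -/
def Nilpotent (ρ : LCAModule C M) : Prop :=
  ∃ n : ℕ, 1 ≤ n ∧ ∀ l : List (L × ℕ), l.length = n → ∀ m : M, ρ.iterAct l m = 0

/-- `M` is finitely generated as an `L`-module. -/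
def FG (ρ : LCAModule C M) : Prop :=
  ∃ s : Finset M, ∀ N : Submodule ℂ M, ρ.IsSub N → (s : Set M) ⊆ (N : Set M) → N = ⊤

/-- The `L`-submodule `N` is finitely generated as an `L`-module. -/
def FGIn (ρ : LCAModule C M) (N : Submodule ℂ M) : Prop :=
  ∃ s : Finset M, (s : Set M) ⊆ (N : Set M) ∧
    ∀ P : Submodule ℂ M, ρ.IsSub P → (s : Set M) ⊆ (P : Set M) → N ≤ P

/-- `M` is finitely generated as a `ℂ[∂]`-module. -/
def FGPoly (ρ : LCAModule C M) : Prop :=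
  ∃ s : Finset M, ∀ N : Submodule ℂ M, (∀ m ∈ N, ρ.DM m ∈ N) → (s : Set M) ⊆ (N : Set M) → N = ⊤

end LCAModule

/-- A family is `ℂ[∂]`-linearly independent. -/
def polyIndep {M : Type} [AddCommGroup M] [Module ℂ M] (DM : M →ₗ[ℂ] M)
    {r : ℕ} (v : Fin r → M) : Prop :=
  ∀ q : Fin r → Polynomial ℂ,
    (∑ k, (q k).sum fun t c => c • (⇑DM)^[t] (v k)) = 0 → ∀ k, q k = 0

/-- The `ℂ[∂]`-rank of a submodule, in `ℕ∞`. -/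
def polyRank {M : Type} [AddCommGroup M] [Module ℂ M] (DM : M →ₗ[ℂ] M)
    (N : Submodule ℂ M) : ℕ∞ :=
  ⨆ r ∈ {r : ℕ | ∃ v : Fin r → M, (∀ k, v k ∈ N) ∧ polyIndep DM v}, (r : ℕ∞)

/-- A graded module over a `ℤ`-graded Lie conformal algebra. -/
structure GradedLCAModule {L : Type} [AddCommGroup L] [Module ℂ L] (C : GradedLCA L)
    (M : Type) [AddCommGroup M] [Module ℂ M]
    extends LCAModule C.toLieConformalAlgebra M where
  GM : ℤ → Submodule ℂ M
  internal : DirectSum.IsInternal GM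
  dGrade : ∀ i : ℤ, ∀ m ∈ GM i, DM m ∈ GM i
  actGrade : ∀ (i j : ℤ) (n : ℕ), ∀ a ∈ C.G i, ∀ m ∈ GM j, act n a m ∈ GM (i + j)

namespace GradedLCAModule

variable {L : Type} [AddCommGroup L] [Module ℂ L] {C : GradedLCA L}
variable {M : Type} [AddCommGroup M] [Module ℂ M]

/-- `Mⁿ = ⊕_{|i| ≤ n} M_i`. -/
def seg (ρ : GradedLCAModule C M) (n : ℕ) : Submodule ℂ M :=
  ⨆ i : ℤ, ⨆ _ : |i| ≤ (n : ℤ), ρ.GM i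

/-- `e(M) = liminf (1/n) rank_{ℂ[∂]} Mⁿ`. -/
def eM (ρ : GradedLCAModule C M) : ℝ≥0∞ :=
  Filter.atTop.liminf fun n : ℕ => (polyRank ρ.DM (ρ.seg n) : ℝ≥0∞) / (n : ℝ≥0∞)

/-- Each `M_i` is a nilpotent `L₀`-module. -/
def Weightless (ρ : GradedLCAModule C M) : Prop :=
  ∀ i : ℤ, ∃ n : ℕ, 1 ≤ n ∧ ∀ l : List (L × ℕ), l.length = n →
    (∀ q ∈ l, q.1 ∈ C.G 0) → ∀ m ∈ ρ.GM i, ρ.toLCAModule.iterAct l m = 0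

/-- The submodule `I(M)` generated by all homogeneous `v` lying in the span of
the iterated actions of `L` on `v`. -/
def IM (ρ : GradedLCAModule C M) : Submodule ℂ M :=
  sInf {N : Submodule ℂ M | ρ.toLCAModule.IsSub N ∧
    {v : M | (∃ i : ℤ, v ∈ ρ.GM i) ∧
      v ∈ Submodule.span ℂ
        {w : M | ∃ l : List (L × ℕ), 1 ≤ l.length ∧ w = ρ.toLCAModule.iterAct l v}} ⊆ N}

end GradedLCAModule

/-- The structure context for graded Lie conformal algebras all of whose
nonzero components are free of rank one over `ℂ[∂]`: fixed homogeneous bases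
`bas i` and structure polynomials `sp i j ∈ ℂ[∂][λ]`, with `0 ∈ Supp(L)` and
`L₀` abelian. -/
structure RankOneContext (L : Type) [AddCommGroup L] [Module ℂ L]
    extends GradedLCA L where
  bas : ℤ → L
  sp : ℤ → ℤ → Polynomial (Polynomial ℂ)
  bas_mem : ∀ i : ℤ, bas i ∈ G i
  bas_zero : ∀ i : ℤ, G i = ⊥ → bas i = 0
  bas_indep : ∀ i : ℤ, G i ≠ ⊥ → LinearIndependent ℂ fun k : ℕ => (⇑D)^[k] (bas i)
  bas_span : ∀ i : ℤ, G i ≠ ⊥ →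
    G i = Submodule.span ℂ (Set.range fun k : ℕ => (⇑D)^[k] (bas i))
  sp_brkt : ∀ (i j : ℤ) (n : ℕ),
    prd n (bas i) (bas j)
      = (Nat.factorial n : ℂ) • (((sp i j).coeff n).sum fun k c => c • (⇑D)^[k] (bas (i + j)))
  sp_zero : ∀ i j : ℤ, (G i = ⊥ ∨ G j = ⊥ ∨ G (i + j) = ⊥) → sp i j = 0
  supp_zero : G 0 ≠ ⊥
  abelian0 : ∀ n : ℕ, ∀ x ∈ G 0, ∀ y ∈ G 0, prd n x y = 0

/-- A Lie conformal algebra of class `𝒱`. -/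
structure ClassV (L : Type) [AddCommGroup L] [Module ℂ L]
    extends RankOneContext L where
  supp_one : G 1 ≠ ⊥
  supp_negone : G (-1) ≠ ⊥
  genV : ∀ N : Submodule ℂ L, (∀ x ∈ N, D x ∈ N) →
    (∀ n : ℕ, ∀ a ∈ N, ∀ b ∈ N, prd n a b ∈ N) →
    G 1 ≤ N → G 0 ≤ N → G (-1) ≤ N → N = ⊤
  ne_m11 : sp (-1) 1 ≠ 0
  ne_01 : sp 0 1 ≠ 0

/-!
Write `p i j` for `p_{i,j}` and `w i` for `p_{0,i}`. Evaluating `∂`, `λ`, `μ` at scalars turns the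
Jacobi identity for `Lᵢ, Lⱼ, Lₖ` into an identity between values of the `p i j`. For `L₀, L₀, Lⱼ` it
says that `w j` is a polynomial in `λ` alone. For `L₀, Lᵢ, Lⱼ` it compares `p i j` with its shifts
in `∂` and `λ`. Looking at leading coefficients gives `w (i + j) = w i + w j` whenever `p i j ≠ 0`,
in particular `w (-k) = -w k`, and forces `p i j` to be a constant when `w i` and `w j` are linearly
independent.

Suppose `w k` and `w j` are linearly independent. Then every product of structure polynomials on
the left of the Jacobi identity for `L₋ₖ, Lₖ, Lⱼ` is a constant, while the right side is
`p (-k) k` at `∂ = -s` times `w j` at `s`. Hence `w j` is a constant, and one of `p k j`, `p (-k) j`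
is nonzero. Accordingly let `i = k` or `i = -k`. Since `w (i + j) = w i + w j`, the argument also
applies to `i + j`, so `w (i + j)` is a constant too. But `w (i + j)` and `w j` are linearly
independent, a contradiction.
-/

theorem coeff_taylor_of_natDegree_le_succ {R : Type*} [CommSemiring R] (r : R) {f : R[X]} {d : ℕ}
    (hf : f.natDegree ≤ d + 1) :
    (taylor r f).coeff d = f.coeff d + (d + 1) * r * f.coeff (d + 1) := by
  have hdeg : (hasseDeriv d f).natDegree < 2 :=
    (natDegree_hasseDeriv_le f d).trans_lt (by omega)
  rw [taylor_coeff, eval_eq_sum_range' hdeg]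
  simp only [hasseDeriv_coeff, Finset.sum_range_succ, Finset.sum_range_zero, Nat.zero_add,
    Nat.choose_self, Nat.add_comm 1 d, Nat.choose_succ_self_right]
  push_cast
  ring

theorem natDegree_eq_zero_of_taylor_eq_self {R : Type*} [CommRing R] [IsDomain R] [CharZero R]
    {r : R} (hr : r ≠ 0) {f : R[X]} (hf : taylor r f = f) : f.natDegree = 0 := by
  by_contra hdeg
  obtain ⟨d, hd⟩ := Nat.exists_eq_succ_of_ne_zero hdeg
  have hcoeff := coeff_taylor_of_natDegree_le_succ r hd.le
  have hlead : f.coeff (d + 1) ≠ 0 :=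
    coeff_ne_zero_of_eq_degree ((degree_eq_iff_natDegree_eq_of_pos d.succ_pos).2 hd)
  rw [hf, left_eq_add] at hcoeff
  simp [hr, hlead, Nat.cast_add_one_ne_zero] at hcoeff

theorem eq_of_eval_C_eq {R : Type*} [CommRing R] [IsDomain R] [Infinite R] {p q : R[X][X]}
    (h : ∀ y, p.eval (C y) = q.eval (C y)) : p = q :=
  eq_of_infinite_eval_eq p q <| (Set.infinite_range_of_injective C_injective).mono <| by
    rintro _ ⟨y, rfl⟩
    exact h y

theorem evalEval_ext {R : Type*} [CommRing R] [IsDomain R] [Infinite R] {p q : R[X][X]}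
    (h : ∀ x y, p.evalEval x y = q.evalEval x y) : p = q :=
  eq_of_eval_C_eq fun y => Polynomial.funext fun x => h x y

section

variable {R : Type*} [CommRing R] [IsDomain R] [CharZero R]

theorem eq_map_C_of_shift_symm {p : R[X][X]}
    (h : ∀ x l m, p.evalEval (x + l) m * p.evalEval x l = p.evalEval (x + m) l * p.evalEval x m) :
    p = (p.map (evalRingHom 0)).map C := by
  have eval_const (l : R) (hl : l ≠ 0) (hp : p.eval (C (-l)) ≠ 0) :
      (p.eval (C l)).natDegree = 0 := by
    by_cases hpl : p.eval (C l) = 0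
    · rw [hpl, natDegree_zero]
    -- At `m = -l` the hypothesis makes `p(∂ - l, l) p(∂, -l)` invariant under `∂ ↦ ∂ + l`.
    have hperiodic : taylor l (taylor (-l) (p.eval (C l)) * p.eval (C (-l))) =
        taylor (-l) (p.eval (C l)) * p.eval (C (-l)) := by
      refine Polynomial.funext fun x => ?_
      simpa only [taylor_mul, eval_mul, taylor_eval, add_neg_cancel_right, mul_comm]
        using h x l (-l)
    have hdeg := natDegree_eq_zero_of_taylor_eq_self hl hperiodic
    rw [natDegree_mul (by simpa using hpl) hp, natDegree_taylor] at hdeg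
    exact (add_eq_zero.1 hdeg).1
  rcases eq_or_ne p 0 with rfl | hp
  · simp
  have hmul : (p - (p.map (evalRingHom 0)).map C) * (X * p).comp (-X) = 0 := by
    refine eq_of_eval_C_eq fun l => ?_
    rw [eval_mul, eval_zero, mul_eq_zero, eval_sub, sub_eq_zero, or_iff_not_imp_right]
    intro hl
    simp only [mul_comp, X_comp, eval_mul, eval_comp, eval_neg, eval_X, mul_eq_zero,
      not_or, ← C_neg] at hl
    have hconst := eq_C_of_natDegree_eq_zero (eval_const l (by simpa using hl.1) hl.2)
    rwa [coeff_zero_eq_eval_zero, ← evalEval, ← map_evalRingHom_eval, ← eval_map_apply]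
      at hconst
  have hXp : (X * p).comp (-X) ≠ 0 := mt comp_neg_X_eq_zero_iff.1 (mul_ne_zero X_ne_zero hp)
  exact sub_eq_zero.1 ((mul_eq_zero.1 hmul).resolve_right hXp)

theorem eq_zero_of_mul_eval_add_eq {F G : R[X]} (hFG : LinearIndependent R ![F, G])
    {a b : R} (h : ∀ l, a * l * (F + G).eval l = b * l * F.eval l) : a = 0 ∧ b = 0 := by
  have hX : X * (a • (F + G) - b • F) = 0 := by
    refine Polynomial.funext fun l => ?_
    simp only [eval_mul, eval_X, eval_sub, eval_smul, smul_eq_mul, eval_zero]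
    linear_combination h l
  have hrel : (-b) • F + a • (F + G) = 0 := by
    rw [neg_smul, neg_add_eq_sub]
    exact (mul_eq_zero.1 hX).resolve_left X_ne_zero
  obtain ⟨hb, ha⟩ :=
    LinearIndependent.pair_iff.1 (LinearIndependent.pair_add_right_iff.2 hFG) _ _ hrel
  exact ⟨ha, neg_eq_zero.1 hb⟩

theorem natDegree_eq_zero_of_smul_taylor_sub {F G b : R[X]} (hFG : LinearIndependent R ![F, G])
    {t : R} (h : ∀ l, (F + G).eval l • (taylor l b - b) = C (t * l * F.eval l)) :
    b.natDegree = 0 ∧ t = 0 := by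
  rcases hd : b.natDegree with _ | d
  · refine ⟨rfl, (eq_zero_of_mul_eval_add_eq hFG (a := 0) fun l => ?_).2⟩
    have hconst := h l
    rw [eq_C_of_natDegree_eq_zero hd, taylor_C, sub_self, smul_zero] at hconst
    rw [C_eq_zero.1 hconst.symm, zero_mul, zero_mul]
  · have hlead : b.coeff (d + 1) ≠ 0 :=
      coeff_ne_zero_of_eq_degree ((degree_eq_iff_natDegree_eq_of_pos d.succ_pos).2 hd)
    have hzero : (d + 1) * b.coeff (d + 1) = 0 := by
      refine (eq_zero_of_mul_eval_add_eq hFG (b := if d = 0 then t else 0) fun l => ?_).1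
      have hcoeff := congr($(h l) |>.coeff d)
      rw [coeff_smul, coeff_sub, coeff_taylor_of_natDegree_le_succ l hd.le, coeff_C,
        smul_eq_mul] at hcoeff
      split_ifs at hcoeff ⊢ <;> linear_combination hcoeff
    exact absurd hzero (mul_ne_zero (Nat.cast_add_one_ne_zero d) hlead)

/-- The functional equation `H(λ) p(∂ + λ, μ) = F(λ) p(∂, λ + μ) + G(λ) p(∂, μ)`. For `p = p_{i,j}`
and `F, G, H = p_{0,i}, p_{0,j}, p_{0,i+j}` it is the Jacobi identity for `L₀, Lᵢ, Lⱼ`. -/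
def ShiftEquation {R : Type*} [CommRing R] (F G H : R[X]) (p : R[X][X]) : Prop :=
  ∀ x l m, H.eval l * p.evalEval (x + l) m =
    F.eval l * p.evalEval x (l + m) + G.eval l * p.evalEval x m

namespace ShiftEquation

variable {F G H : R[X]} {p : R[X][X]}

theorem smul_taylor_coeff (h : ShiftEquation F G H p) (l : R) (n : ℕ) :
    H.eval l • taylor l (p.coeff n) =
      F.eval l • (taylor (C l) p).coeff n + G.eval l • p.coeff n := by
  have hpoly : H.eval l • p.map (taylorAlgHom l : R[X] →+* R[X]) =
      F.eval l • taylor (C l) p + G.eval l • p := by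
    refine evalEval_ext fun x m => ?_
    rw [evalEval_add, evalEval_smul, evalEval_smul, evalEval_smul]
    have hl : (p.map (taylorAlgHom l : R[X] →+* R[X])).evalEval x m = p.evalEval (x + l) m := by
      have heval := eval_map_apply (taylorAlgHom l : R[X] →+* R[X]) (C m) (p := p)
      simp only [RingHom.coe_coe, taylorAlgHom_apply, taylor_C] at heval
      rw [evalEval, heval, taylor_eval, evalEval]
    have hr : (taylor (C l) p).evalEval x m = p.evalEval x (l + m) := by
      rw [evalEval, taylor_eval, ← C_add, add_comm, evalEval]
    rw [hl, hr]
    exact h x l m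
  simpa using congr($hpoly |>.coeff n)

theorem eq_add (h : ShiftEquation F G H p) (hp : p ≠ 0) : H = F + G := by
  refine Polynomial.funext fun l => ?_
  have hlead := h.smul_taylor_coeff l p.natDegree
  rw [coeff_taylor_natDegree, coeff_natDegree, ← add_smul] at hlead
  have := congr($hlead |>.coeff p.leadingCoeff.natDegree)
  simpa [coeff_taylor_natDegree, hp] using this

theorem natDegree_leadingCoeff (h : ShiftEquation F G (F + G) p)
    (hFG : LinearIndependent R ![F, G]) : p.leadingCoeff.natDegree = 0 := by
  refine (natDegree_eq_zero_of_smul_taylor_sub hFG (t := 0) fun l => ?_).1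
  have hlead := h.smul_taylor_coeff l p.natDegree
  rw [coeff_taylor_natDegree, coeff_natDegree, ← add_smul, ← eval_add] at hlead
  rw [smul_sub, hlead, sub_self, zero_mul, zero_mul, C_0]

theorem natDegree_eq_zero (h : ShiftEquation F G (F + G) p)
    (hFG : LinearIndependent R ![F, G]) : p.natDegree = 0 := by
  by_contra hpos
  obtain ⟨n, hn⟩ := Nat.exists_eq_add_one_of_ne_zero hpos
  obtain ⟨a, ha⟩ := Polynomial.natDegree_eq_zero.1 (h.natDegree_leadingCoeff hFG)
  have hmul : (n + 1) * a = 0 := by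
    refine (natDegree_eq_zero_of_smul_taylor_sub hFG (b := p.coeff n) fun l => ?_).2
    have hcoeff := h.smul_taylor_coeff l n
    rw [coeff_taylor_of_natDegree_le_succ _ hn.le, ← hn, coeff_natDegree, ← ha] at hcoeff
    rw [smul_sub, hcoeff]
    simp only [eval_add, smul_eq_C_mul, C_mul, C_add, map_natCast, map_one]
    ring
  rw [(mul_eq_zero.1 hmul).resolve_left (Nat.cast_add_one_ne_zero n), C_0, eq_comm,
    leadingCoeff_eq_zero] at ha
  exact hpos (ha ▸ natDegree_zero)

theorem exists_eq_CC (h : ShiftEquation F G (F + G) p) (hFG : LinearIndependent R ![F, G]) :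
    ∃ a, p = CC a := by
  obtain ⟨a, ha⟩ := Polynomial.natDegree_eq_zero.1 (h.natDegree_leadingCoeff hFG)
  have hp := eq_C_of_natDegree_eq_zero (h.natDegree_eq_zero hFG)
  rw [leadingCoeff, h.natDegree_eq_zero hFG] at ha
  exact ⟨a, by rw [hp, ← ha]⟩

end ShiftEquation

end

/-- The Jacobi identity for `Lᵢ, Lⱼ, Lₖ`, written for structure polynomials `p i j = p_{i,j}`:
`p.evalEval x l` stands for `p(∂, λ)` at `∂ = x`, `λ = l`. -/
def JacobiIdentity {Γ R : Type*} [AddCommGroup Γ] [CommRing R] (p : Γ → Γ → R[X][X]) : Prop :=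
  ∀ i j k x l m, (p j k).evalEval (x + l) m * (p i (j + k)).evalEval x l -
      (p i k).evalEval (x + m) l * (p j (i + k)).evalEval x m =
    (p i j).evalEval (-l - m) l * (p (i + j) k).evalEval x (l + m)

/-- The structure polynomial `p_{0,j}` as a polynomial in `λ` alone. Setting `∂ = 0` loses nothing
when `p_{0,0} = 0`, see `JacobiIdentity.eq_map_weight`. -/
def weight {Γ R : Type*} [AddCommGroup Γ] [CommRing R] (p : Γ → Γ → R[X][X]) (j : Γ) : R[X] :=
  (p 0 j).map (evalRingHom 0)

theorem not_linearIndependent_pair_of_natDegree_eq_zero {R : Type*} [CommRing R] [Nontrivial R]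
    {f g : R[X]} (hf : f.natDegree = 0) (hg : g.natDegree = 0) : ¬ LinearIndependent R ![f, g] := by
  intro hfg
  obtain ⟨a, rfl⟩ := natDegree_eq_zero.1 hf
  obtain ⟨b, rfl⟩ := natDegree_eq_zero.1 hg
  have hab : b • C a + (-a) • C b = 0 := by
    simp only [smul_C, smul_eq_mul, neg_mul, C_neg, mul_comm b a, add_neg_cancel]
  have hb := (LinearIndependent.pair_iff.1 hfg _ _ hab).1
  exact hfg.ne_zero 1 (by simp [hb])

section

variable {R : Type*} [CommRing R] [IsDomain R]

theorem natDegree_eq_zero_of_evalEval_neg_mul_eval_eq [Infinite R] {r : R[X][X]} {g : R[X]} {a : R}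
    (hr : r ≠ 0) (hg : g ≠ 0) (h : ∀ s l, r.evalEval (-s) l * g.eval s = a) :
    g.natDegree = 0 ∧ a ≠ 0 := by
  obtain ⟨l, hl⟩ : ∃ l, r.eval (C l) ≠ 0 := by
    by_contra! hzero
    exact hr (eq_of_eval_C_eq fun l => by rw [hzero, eval_zero])
  have hl' : (r.eval (C l)).comp (-X) ≠ 0 := mt comp_neg_X_eq_zero_iff.1 hl
  have hmul : (r.eval (C l)).comp (-X) * g = C a := by
    refine Polynomial.funext fun s => ?_
    rw [eval_mul, eval_comp, eval_neg, eval_X, eval_C]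
    exact h s l
  have hdeg := congr($hmul |>.natDegree)
  rw [natDegree_mul hl' hg, natDegree_C, add_eq_zero] at hdeg
  exact ⟨hdeg.2, C_ne_zero.1 (hmul ▸ mul_ne_zero hl' hg)⟩

namespace JacobiIdentity

variable [CharZero R] {Γ : Type*} [AddCommGroup Γ] {p : Γ → Γ → R[X][X]}

theorem eq_map_weight (h : JacobiIdentity p) (h0 : p 0 0 = 0) (j : Γ) :
    p 0 j = (weight p j).map C := by
  refine eq_map_C_of_shift_symm fun x l m => ?_
  have hJ := h 0 0 j x l m
  rwa [h0, evalEval_zero, zero_mul, zero_add, sub_eq_zero] at hJ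

theorem evalEval_zero_left (h : JacobiIdentity p) (h0 : p 0 0 = 0) (j : Γ) (x l : R) :
    (p 0 j).evalEval x l = (weight p j).eval l := by
  rw [h.eq_map_weight h0, evalEval_map_C]

theorem shiftEquation (h : JacobiIdentity p) (h0 : p 0 0 = 0) (i j : Γ) :
    ShiftEquation (weight p i) (weight p j) (weight p (i + j)) (p i j) := by
  intro x l m
  have hJ := h 0 i j x l m
  simp only [zero_add, h.evalEval_zero_left h0] at hJ
  linear_combination hJ

theorem weight_add (h : JacobiIdentity p) (h0 : p 0 0 = 0) {i j : Γ} (hij : p i j ≠ 0) :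
    weight p (i + j) = weight p i + weight p j :=
  (h.shiftEquation h0 i j).eq_add hij

theorem weight_neg (h : JacobiIdentity p) (h0 : p 0 0 = 0) {k : Γ} (hk : p (-k) k ≠ 0) :
    weight p (-k) = -weight p k := by
  have hadd := h.weight_add h0 hk
  rw [neg_add_cancel, weight, h0, Polynomial.map_zero] at hadd
  exact eq_neg_of_add_eq_zero_left hadd.symm

theorem exists_eq_CC (h : JacobiIdentity p) (h0 : p 0 0 = 0) {i j : Γ}
    (hij : LinearIndependent R ![weight p i, weight p j]) : ∃ a, p i j = CC a := by
  by_cases hp : p i j = 0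
  · exact ⟨0, by rw [hp, CC, C_0, C_0]⟩
  · exact ShiftEquation.exists_eq_CC (h.weight_add h0 hp ▸ h.shiftEquation h0 i j) hij

theorem linearIndependent_weight_add_right (h : JacobiIdentity p) (h0 : p 0 0 = 0) {i j : Γ}
    (hij : LinearIndependent R ![weight p i, weight p j]) (hp : p i j ≠ 0) :
    LinearIndependent R ![weight p i, weight p (i + j)] := by
  rwa [h.weight_add h0 hp, LinearIndependent.pair_add_right_iff]

theorem linearIndependent_weight_add_left (h : JacobiIdentity p) (h0 : p 0 0 = 0) {i j : Γ}
    (hij : LinearIndependent R ![weight p i, weight p j]) (hp : p i j ≠ 0) :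
    LinearIndependent R ![weight p (i + j), weight p j] := by
  rwa [h.weight_add h0 hp, LinearIndependent.pair_add_left_iff]

theorem exists_evalEval_mul_eq (h : JacobiIdentity p) (h0 : p 0 0 = 0) {i j : Γ}
    (hi : weight p (-i) = -weight p i) (hij : LinearIndependent R ![weight p i, weight p j]) :
    ∃ a, (∀ x y l m, (p i j).evalEval y m * (p (-i) (i + j)).evalEval x l = a) ∧
      (p i j = 0 → a = 0) := by
  by_cases hp : p i j = 0
  · exact ⟨0, fun x y l m => by rw [hp, evalEval_zero, zero_mul], fun _ => rfl⟩
  · obtain ⟨a, ha⟩ := h.exists_eq_CC h0 hij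
    obtain ⟨b, hb⟩ := h.exists_eq_CC h0 (i := -i) (j := i + j) <| by
      rw [hi, LinearIndependent.pair_neg_left_iff]
      exact h.linearIndependent_weight_add_right h0 hij hp
    exact ⟨a * b, fun x y l m => by rw [ha, hb, evalEval_CC, evalEval_CC], (absurd · hp)⟩

theorem natDegree_weight_eq_zero (h : JacobiIdentity p) (h0 : p 0 0 = 0) {j k : Γ}
    (hk : p (-k) k ≠ 0) (hkj : LinearIndependent R ![weight p k, weight p j]) :
    (weight p j).natDegree = 0 ∧ (p k j ≠ 0 ∨ p (-k) j ≠ 0) := by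
  have hneg := h.weight_neg h0 hk
  obtain ⟨a, ha, ha0⟩ := h.exists_evalEval_mul_eq h0 hneg hkj
  obtain ⟨b, hb, hb0⟩ := h.exists_evalEval_mul_eq h0 (i := -k) (j := j)
    (by rw [neg_neg, hneg, neg_neg]) (by rwa [hneg, LinearIndependent.pair_neg_left_iff])
  have hprod (s l : R) : (p (-k) k).evalEval (-s) l * (weight p j).eval s = a - b := by
    have hJ := h (-k) k j 0 l (s - l)
    rw [neg_neg] at hb
    rw [ha, hb, neg_add_cancel, h.evalEval_zero_left h0, add_sub_cancel,
      show -l - (s - l) = -s by ring] at hJ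
    exact hJ.symm
  obtain ⟨hdeg, hab⟩ := natDegree_eq_zero_of_evalEval_neg_mul_eval_eq hk (hkj.ne_zero 1) hprod
  refine ⟨hdeg, ?_⟩
  by_contra! hzero
  exact hab (by rw [ha0 hzero.1, hb0 hzero.2, sub_zero])

theorem not_linearIndependent_weight (h : JacobiIdentity p) (h0 : p 0 0 = 0) {k : Γ}
    (hk : p (-k) k ≠ 0) (j : Γ) : ¬ LinearIndependent R ![weight p k, weight p j] := by
  intro hkj
  obtain ⟨hj, hp⟩ := h.natDegree_weight_eq_zero h0 hk hkj
  have hneg := h.weight_neg h0 hk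
  have hnegj : LinearIndependent R ![weight p (-k), weight p j] := by
    rwa [hneg, LinearIndependent.pair_neg_left_iff]
  obtain ⟨i, hij, hki⟩ : ∃ i, LinearIndependent R ![weight p (i + j), weight p j] ∧
      LinearIndependent R ![weight p k, weight p (i + j)] := by
    rcases hp with hp | hp
    · exact ⟨k, h.linearIndependent_weight_add_left h0 hkj hp,
        h.linearIndependent_weight_add_right h0 hkj hp⟩
    · refine ⟨-k, h.linearIndependent_weight_add_left h0 hnegj hp, ?_⟩
      rw [← LinearIndependent.pair_neg_left_iff, ← hneg]
      exact h.linearIndependent_weight_add_right h0 hnegj hp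
  have hdeg := (h.natDegree_weight_eq_zero h0 hk hki).1
  exact not_linearIndependent_pair_of_natDegree_eq_zero hdeg hj hij

end JacobiIdentity

end

theorem JacobiIdentity.exists_eq_smul {K Γ : Type*} [Field K] [CharZero K] [AddCommGroup Γ]
    {p : Γ → Γ → K[X][X]} (h : JacobiIdentity p) (h0 : p 0 0 = 0) {k : Γ} (hk : p (-k) k ≠ 0)
    (hk0 : p 0 k ≠ 0) (j : Γ) : ∃ c : K, p 0 j = c • p 0 k := by
  have hweight : weight p k ≠ 0 := fun hzero =>
    hk0 (by rw [h.eq_map_weight h0, hzero, Polynomial.map_zero])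
  obtain ⟨c, hc⟩ : ∃ c : K, c • weight p k = weight p j := by
    simpa [LinearIndependent.pair_iff' hweight] using h.not_linearIndependent_weight h0 hk j
  refine ⟨c, ?_⟩
  rw [h.eq_map_weight h0 j, h.eq_map_weight h0 k, ← hc, smul_eq_C_mul, Polynomial.map_mul, map_C,
    Algebra.smul_def, coe_algebraMap_eq_CC]

theorem map_aeval_apply {R M N : Type*} [CommSemiring R] [AddCommMonoid M] [AddCommMonoid N]
    [Module R M] [Module R N] {φ : M →ₗ[R] N} {f : Module.End R M} {g : Module.End R N}
    (h : φ ∘ₗ f = g ∘ₗ φ) (q : R[X]) (x : M) : φ (aeval f q x) = aeval g q (φ x) := by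
  have hpow (n : ℕ) : φ ((f ^ n) x) = (g ^ n) (φ x) :=
    congr($((Module.End.commute_pow_left_of_commute h.symm n).symm) x)
  simp only [aeval_eq_sum_range, LinearMap.sum_apply, LinearMap.smul_apply, map_sum, map_smul,
    hpow]

open Finset.HasAntidiagonal (antidiagonal mem_antidiagonal)

theorem finsum_sum_antidiagonal {M : Type*} [AddCommMonoid M] {f : ℕ × ℕ → M}
    (hf : f.HasFiniteSupport) : ∑ᶠ n, ∑ q ∈ antidiagonal n, f q = ∑ᶠ q, f q := by
  rw [finsum_eq_sum f hf, ← Finset.sum_fiberwise_of_maps_to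
    (g := fun q : ℕ × ℕ => q.1 + q.2) (fun q hq => Finset.mem_image_of_mem _ hq),
    finsum_eq_sum_of_support_subset (s := hf.toFinset.image fun q => q.1 + q.2)]
  · refine Finset.sum_congr rfl fun n _ =>
      (Finset.sum_subset (fun q hq => ?_) fun q hq hq' => ?_).symm
    · exact mem_antidiagonal.2 (Finset.mem_filter.1 hq).2
    · by_contra hne
      exact hq' (Finset.mem_filter.2 ⟨hf.mem_toFinset.2 hne, mem_antidiagonal.1 hq⟩)
  · intro n hn
    obtain ⟨q, hq, hne⟩ := Finset.exists_ne_zero_of_sum_ne_zero hn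
    exact Finset.mem_image.2 ⟨q, hf.mem_toFinset.2 hne, mem_antidiagonal.1 hq⟩

theorem finsum_sum_antidiagonal_eq_finsum_finsum {M : Type*} [AddCommMonoid M] {g : ℕ → ℕ → M}
    (hg : (fun q : ℕ × ℕ => g q.1 q.2).HasFiniteSupport) :
    ∑ᶠ n, ∑ q ∈ antidiagonal n, g q.1 q.2 = ∑ᶠ j, ∑ᶠ i, g i j := by
  rw [finsum_sum_antidiagonal hg, ← finsum_comp_equiv (Equiv.prodComm ℕ ℕ)]
  exact finsum_curry _ (hg.comp_of_injective (Equiv.prodComm ℕ ℕ).injective)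

/-- The divided power `rⁿ / n!`, the coefficient of the `n`-th product in the `λ`-bracket at
`λ = r`. -/
def divPow {K : Type*} [Field K] (r : K) (n : ℕ) : K := r ^ n / n.factorial

section

variable {K : Type*} [Field K] [CharZero K]

theorem divPow_succ_mul (r : K) (n : ℕ) : divPow r (n + 1) * (n + 1 : ℕ) = r * divPow r n := by
  have := Nat.cast_add_one_ne_zero (R := K) n
  have := Nat.cast_ne_zero (R := K).2 n.factorial_ne_zero
  simp only [divPow, Nat.factorial_succ]
  push_cast
  field_simp
  ring

theorem divPow_add_mul_choose (r : K) (i j : ℕ) :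
    divPow r (i + j) * (i + j).choose i = divPow r i * divPow r j := by
  have := Nat.cast_ne_zero (R := K).2 (i + j).factorial_ne_zero
  have := Nat.cast_ne_zero (R := K).2 i.factorial_ne_zero
  have := Nat.cast_ne_zero (R := K).2 j.factorial_ne_zero
  simp only [divPow, Nat.cast_add_choose K]
  field_simp
  ring

theorem divPow_add (r s : K) (n : ℕ) :
    divPow (r + s) n = ∑ q ∈ antidiagonal n, divPow r q.1 * divPow s q.2 := by
  rw [divPow, Commute.add_pow' (Commute.all r s), Finset.sum_div]
  refine Finset.sum_congr rfl fun q hq => ?_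
  obtain rfl := mem_antidiagonal.1 hq
  have := Nat.cast_ne_zero (R := K).2 (q.1 + q.2).factorial_ne_zero
  rw [nsmul_eq_mul, Nat.cast_add_choose K, divPow, divPow]
  field_simp

theorem finsum_divPow_mul_smul_pred {M : Type*} [AddCommGroup M] [Module K M] (r : K) (f : ℕ → M) :
    ∑ᶠ n : ℕ, (divPow r n * n) • f (n - 1) = r • ∑ᶠ n, divPow r n • f n := by
  rw [smul_finsum]
  calc ∑ᶠ n : ℕ, (divPow r n * n) • f (n - 1)
      = ∑ᶠ n ∈ Set.range Nat.succ, (divPow r n * n) • f (n - 1) := by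
        refine (finsum_mem_univ _).symm.trans (finsum_mem_inter_support_eq' _ _ _ fun n hn => ?_)
        have : n ≠ 0 := by rintro rfl; simp at hn
        simpa [Nat.range_succ] using Nat.pos_of_ne_zero this
    _ = ∑ᶠ n, r • divPow r n • f n := by
        rw [finsum_mem_range Nat.succ_injective]
        exact finsum_congr fun n => by
          rw [Nat.succ_eq_add_one, divPow_succ_mul, mul_smul, Nat.add_sub_cancel]

end

namespace LieConformalAlgebra

variable {L : Type} [AddCommGroup L] [Module ℂ L] (A : LieConformalAlgebra L)

@[fun_prop]
theorem hasFiniteSupport_prd (a b : L) : (fun n => A.prd n a b).HasFiniteSupport := by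
  obtain ⟨N, hN⟩ := A.bound a b
  refine (Set.finite_lt_nat N).subset fun n hn => ?_
  by_contra hle
  exact hn (hN n (not_lt.1 hle))

theorem hasFiniteSupport_prd_add (a b : L) :
    (fun q : ℕ × ℕ => A.prd (q.1 + q.2) a b).HasFiniteSupport := by
  refine Set.Finite.of_finite_fibers (fun q : ℕ × ℕ => q.1 + q.2)
    ((A.hasFiniteSupport_prd a b).subset ?_) fun n _ => ?_
  · rintro _ ⟨q, hq, rfl⟩
    exact hq
  · refine (Finset.finite_toSet (antidiagonal n)).subset ?_
    intro q hq
    simpa using hq.2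

theorem hasFiniteSupport_prd_prd (n : ℕ) (a b c : L) :
    (fun q : ℕ × ℕ => A.prd (q.2 + n) (A.prd q.1 a b) c).HasFiniteSupport := by
  refine Set.Finite.of_finite_fibers Prod.fst
    ((A.hasFiniteSupport_prd a b).subset ?_) fun j _ => ?_
  · rintro _ ⟨q, hq, rfl⟩ hzero
    simp [hzero] at hq
  · have hfib : (fun s => A.prd (s + n) (A.prd j a b) c).HasFiniteSupport :=
      (A.hasFiniteSupport_prd _ c).comp_of_injective (add_left_injective n)
    refine (Set.Finite.image (Prod.mk j) hfib).subset ?_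
    rintro ⟨_, s⟩ ⟨hs, rfl⟩
    exact ⟨s, hs, rfl⟩

/-- The `λ`-bracket `[a_λ b] = ∑ₙ (λⁿ / n!) a_(n) b` evaluated at a scalar `λ = l`. -/
def lambdaBracket (l : ℂ) : L →ₗ[ℂ] L →ₗ[ℂ] L :=
  LinearMap.mk₂ ℂ (fun a b => ∑ᶠ n, divPow l n • A.prd n a b)
    (fun a a' b => by
      simp only [map_add, LinearMap.add_apply, smul_add]
      exact finsum_add_distrib (by fun_prop) (by fun_prop))
    (fun c a b => by
      simp only [map_smul, LinearMap.smul_apply, smul_finsum, smul_comm c])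
    (fun a b b' => by
      simp only [map_add, smul_add]
      exact finsum_add_distrib (by fun_prop) (by fun_prop))
    (fun c a b => by
      simp only [map_smul, smul_finsum, smul_comm c])

theorem lambdaBracket_apply (l : ℂ) (a b : L) :
    A.lambdaBracket l a b = ∑ᶠ n, divPow l n • A.prd n a b := rfl

theorem lambdaBracket_D_left (l : ℂ) (a b : L) :
    A.lambdaBracket l (A.D a) b = -l • A.lambdaBracket l a b := by
  simp only [lambdaBracket_apply, A.sesq, smul_smul, neg_smul, smul_neg, finsum_neg_distrib]
  rw [finsum_divPow_mul_smul_pred l fun n => A.prd n a b]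

theorem lambdaBracket_D_right (l : ℂ) (a b : L) :
    A.lambdaBracket l a (A.D b) = A.D (A.lambdaBracket l a b) + l • A.lambdaBracket l a b := by
  rw [← sub_eq_iff_eq_add']
  simp only [lambdaBracket_apply]
  rw [map_finsum _ (by fun_prop), ← finsum_sub_distrib (by fun_prop)
    (.fun_comp (by fun_prop) (map_zero A.D)), ← finsum_divPow_mul_smul_pred]
  exact finsum_congr fun n => by
    rw [map_smul, A.sesq', smul_add, add_sub_cancel_left, mul_smul]

theorem lambdaBracket_prd_sub (l : ℂ) (n : ℕ) (a b c : L) :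
    A.lambdaBracket l a (A.prd n b c) - A.prd n b (A.lambdaBracket l a c) =
      ∑ᶠ s, divPow l s • A.prd (s + n) (A.lambdaBracket l a b) c := by
  have hterm (m : ℕ) :
      divPow l m • A.prd m a (A.prd n b c) - A.prd n b (divPow l m • A.prd m a c) =
        ∑ q ∈ antidiagonal m,
          (divPow l q.1 * divPow l q.2) • A.prd (q.2 + n) (A.prd q.1 a b) c := by
    rw [map_smul, ← smul_sub, A.jacobi, ← Finset.Nat.sum_antidiagonal_eq_sum_range_succ_mk
      fun q : ℕ × ℕ => (m.choose q.1 : ℂ) • A.prd (m + n - q.1) (A.prd q.1 a b) c, Finset.smul_sum]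
    refine Finset.sum_congr rfl fun q hq => ?_
    obtain rfl := mem_antidiagonal.1 hq
    rw [smul_smul, divPow_add_mul_choose, show q.1 + q.2 + n - q.1 = q.2 + n by omega]
  have hbracket (s : ℕ) : ∑ᶠ j, (divPow l j * divPow l s) • A.prd (s + n) (A.prd j a b) c =
      divPow l s • A.prd (s + n) (A.lambdaBracket l a b) c := by
    rw [lambdaBracket_apply, ← LinearMap.flip_apply, map_finsum _ (by fun_prop), smul_finsum]
    exact finsum_congr fun j => by
      rw [map_smul, smul_smul, mul_comm, LinearMap.flip_apply]
  rw [lambdaBracket_apply, lambdaBracket_apply, map_finsum _ (by fun_prop), ← finsum_sub_distrib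
    (by fun_prop) (.fun_comp (by fun_prop) (map_zero _)), finsum_congr hterm,
    finsum_sum_antidiagonal_eq_finsum_finsum
      (g := fun j s => (divPow l j * divPow l s) • A.prd (s + n) (A.prd j a b) c)
      (.fun_smul_right _ (A.hasFiniteSupport_prd_prd n a b c)),
    finsum_congr hbracket]

theorem lambdaBracket_add (l m : ℂ) (a b : L) :
    A.lambdaBracket (l + m) a b =
      ∑ᶠ n, divPow m n • ∑ᶠ s, divPow l s • A.prd (s + n) a b := by
  have hterm (r : ℕ) : divPow (l + m) r • A.prd r a b =
      ∑ q ∈ antidiagonal r, (divPow m q.2 * divPow l q.1) • A.prd (q.1 + q.2) a b := by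
    rw [divPow_add, Finset.sum_smul]
    refine Finset.sum_congr rfl fun q hq => ?_
    rw [mem_antidiagonal.1 hq, mul_comm]
  rw [lambdaBracket_apply, finsum_congr hterm,
    finsum_sum_antidiagonal_eq_finsum_finsum
      (g := fun s n => (divPow m n * divPow l s) • A.prd (s + n) a b)
      (.fun_smul_right _ (A.hasFiniteSupport_prd_add a b))]
  simp only [smul_finsum, smul_smul]

theorem lambdaBracket_jacobi (l m : ℂ) (a b c : L) :
    A.lambdaBracket l a (A.lambdaBracket m b c) - A.lambdaBracket m b (A.lambdaBracket l a c) =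
      A.lambdaBracket (l + m) (A.lambdaBracket l a b) c := by
  rw [A.lambdaBracket_add]
  simp only [← A.lambdaBracket_prd_sub, smul_sub]
  rw [finsum_sub_distrib (.fun_smul_right _ (.fun_comp (by fun_prop) (map_zero _)))
    (by fun_prop),
    A.lambdaBracket_apply m b, A.lambdaBracket_apply m b, map_finsum _ (by fun_prop)]
  simp only [map_smul]

theorem lambdaBracket_aeval_left (l : ℂ) (q : ℂ[X]) (a b : L) :
    A.lambdaBracket l (aeval A.D q a) b = q.eval (-l) • A.lambdaBracket l a b := by
  have hD : (A.lambdaBracket l).flip b ∘ₗ A.D =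
      algebraMap ℂ (Module.End ℂ L) (-l) ∘ₗ (A.lambdaBracket l).flip b :=
    LinearMap.ext fun x => A.lambdaBracket_D_left l x b
  have haeval := map_aeval_apply hD q a
  rwa [aeval_algebraMap_apply, Module.algebraMap_end_apply] at haeval

theorem lambdaBracket_aeval_right (l : ℂ) (q : ℂ[X]) (a b : L) :
    A.lambdaBracket l a (aeval A.D q b) = aeval A.D (taylor l q) (A.lambdaBracket l a b) := by
  have hD : A.lambdaBracket l a ∘ₗ A.D = aeval A.D (X + C l) ∘ₗ A.lambdaBracket l a := by
    refine LinearMap.ext fun x => ?_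
    rw [map_add, aeval_X, aeval_C]
    exact A.lambdaBracket_D_right l a x
  rw [map_aeval_apply hD, taylor_apply, aeval_comp]

theorem applyP_eq_aeval (q : ℂ[X]) (x : L) : A.applyP q x = aeval A.D q x := by
  simp only [aeval_endomorphism, Module.End.pow_apply, applyP]

theorem BracketEq.lambdaBracket_eq {A : LieConformalAlgebra L} {a b t : L} {p : ℂ[X][X]}
    (h : A.BracketEq a b t p) (l : ℂ) :
    A.lambdaBracket l a b = aeval A.D (p.eval (C l)) t := by
  have hterm (n : ℕ) : divPow l n • A.prd n a b = aeval A.D (p.coeff n * C l ^ n) t := by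
    have := Nat.cast_ne_zero (R := ℂ).2 n.factorial_ne_zero
    rw [h n, applyP_eq_aeval, smul_smul, divPow, div_mul_cancel₀ _ this, ← C_pow, mul_comm,
      ← smul_eq_C_mul, map_smul, LinearMap.smul_apply]
  rw [lambdaBracket_apply, finsum_congr hterm, eval_eq_sum, Polynomial.sum, map_sum,
    LinearMap.sum_apply]
  refine finsum_eq_sum_of_support_subset _ fun n hn => mem_support_iff.2 fun hzero => hn ?_
  change aeval A.D (p.coeff n * C l ^ n) t = 0
  rw [hzero, zero_mul, map_zero, LinearMap.zero_apply]

end LieConformalAlgebra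

namespace RankOneContext

variable {L : Type} [AddCommGroup L] [Module ℂ L] (A : RankOneContext L)

theorem aeval_bas_injective {i : ℤ} (hi : A.G i ≠ ⊥) :
    Function.Injective fun q : ℂ[X] => aeval A.D q (A.bas i) := by
  have hindep := A.bas_indep i hi
  simp only [← Module.End.pow_apply, linearIndependent_powers_iff_aeval] at hindep
  intro p q hpq
  exact sub_eq_zero.1 (hindep _ (by rw [map_sub, LinearMap.sub_apply, sub_eq_zero]; exact hpq))

theorem bracketEq_bas (i j : ℤ) : A.BracketEq (A.bas i) (A.bas j) (A.bas (i + j)) (A.sp i j) :=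
  A.sp_brkt i j

theorem jacobiIdentity_sp : JacobiIdentity A.sp := by
  intro i j k x l m
  by_cases hG : A.G (i + j + k) = ⊥
  · rw [A.sp_zero i (j + k) (by simp [← add_assoc, hG]),
      A.sp_zero j (i + k) (by simp [← add_assoc, add_comm j i, hG]),
      A.sp_zero (i + j) k (by simp [hG])]
    simp only [evalEval_zero, mul_zero, sub_self]
  have hJ := A.lambdaBracket_jacobi l m (A.bas i) (A.bas j) (A.bas k)
  simp only [(A.bracketEq_bas _ _).lambdaBracket_eq, A.lambdaBracket_aeval_left,
    A.lambdaBracket_aeval_right, ← Module.End.mul_apply, ← map_mul] at hJ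
  rw [← add_assoc, add_left_comm, ← add_assoc, ← LinearMap.sub_apply, ← map_sub,
    ← LinearMap.smul_apply, ← map_smul] at hJ
  have heval := congr(eval x $(A.aeval_bas_injective hG hJ))
  rw [eval_sub, eval_mul, eval_mul, eval_smul, taylor_eval, taylor_eval, neg_add', smul_eq_mul]
    at heval
  exact heval

theorem sp_zero_zero : A.sp 0 0 = 0 := by
  refine eq_of_eval_C_eq fun l => A.aeval_bas_injective A.supp_zero ?_
  have hbracket := (A.bracketEq_bas 0 0).lambdaBracket_eq l
  rw [A.lambdaBracket_apply, finsum_eq_zero_of_forall_eq_zero fun n => by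
    rw [A.abelian0 n _ (A.bas_mem 0) _ (A.bas_mem 0), smul_zero], add_zero] at hbracket
  simpa using hbracket.symm

end RankOneContext

theorem p0j_proportional_to_p0k_general
    {L : Type} [AddCommGroup L] [Module ℂ L] (C : RankOneContext L)
    {k : ℤ} (hk1 : C.sp (-k) k ≠ 0) (hk0 : C.sp 0 k ≠ 0) :
    ∀ j : ℤ, C.G j ≠ ⊥ → ∃ c : ℂ, C.sp 0 j = c • C.sp 0 k :=
  fun j _ => C.jacobiIdentity_sp.exists_eq_smul C.sp_zero_zero hk1 hk0 j

/-- if `L` is simple graded and `k ∈ Supp₁(L)`, then every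
`p_{0,j}` is a constant multiple of `p_{0,k}`. -/
theorem p0j_proportional_to_p0k
    {L : Type} [AddCommGroup L] [Module ℂ L] (C : RankOneContext L)
    (hs : C.toGradedLCA.IsSimpleGraded)
    (k : ℤ) (hk : C.G k ≠ ⊥) (hk1 : C.sp (-k) k ≠ 0) (hk0 : C.sp 0 k ≠ 0) :
    ∀ j : ℤ, C.G j ≠ ⊥ → ∃ c : ℂ, C.sp 0 j = c • C.sp 0 k := by
  exact p0j_proportional_to_p0k_general C hk1 hk0
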